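/- Let K be a countably infinite field and let A, B ⊆ K be sets with positive upper Banach density (with respect to the additive group (K,+)). Then for every finite set Q ⊆ K there exists (a_Q, b_Q) ∈ A × B such that Q ⊆ (A − a_Q) · (B − b_Q). In particular, K = (A − A) · (B − B). -/

import Mathlib

open Filter Topology Pointwise
open scoped Classical

/-- A (additive) Følner sequence in a countable abelian group. -/
def IsAddFolner {A : Type*} [AddCommGroup A] (F : ℕ → Finset A) : Prop :=
  (∀ n, (F n).Nonempty) ∧
    ∀ a : A, Tendsto
      (fun n => ((F n ∩ (F n).image (· + a)).card : ℝ) / ((F n).card : ℝ)) atTop (𝓝 1)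

/-- `E` has positive upper Banach density. -/
def PosUpperBanachDensity {A : Type*} [AddCommGroup A] (E : Set A) : Prop :=
  ∃ F : ℕ → Finset A, IsAddFolner F ∧
    0 < limsup (fun n => (((F n).filter (· ∈ E)).card : ℝ) / ((F n).card : ℝ)) atTop

/-! ### Means -/

/-- Bounded real function. -/
def BddFn {X : Type*} (f : X → ℝ) : Prop := ∃ C, ∀ x, |f x| ≤ C

/-- A linear functional which is a mean on bounded functions. -/
def IsMean {X : Type*} (m : (X → ℝ) →ₗ[ℝ] ℝ) : Prop :=
  m 1 = 1 ∧ ∀ f, BddFn f → (∀ x, 0 ≤ f x) → 0 ≤ m f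

lemma BddFn.add {X : Type*} {f g : X → ℝ} (hf : BddFn f) (hg : BddFn g) : BddFn (f + g) := by
  obtain ⟨C, hC⟩ := hf
  obtain ⟨D, hD⟩ := hg
  exact ⟨C + D, fun x => (abs_add_le _ _).trans (add_le_add (hC x) (hD x))⟩

lemma BddFn.smul {X : Type*} {f : X → ℝ} (c : ℝ) (hf : BddFn f) : BddFn (c • f) := by
  obtain ⟨C, hC⟩ := hf
  refine ⟨|c| * C, fun x => ?_⟩
  simp only [Pi.smul_apply, smul_eq_mul, abs_mul]
  exact mul_le_mul_of_nonneg_left (hC x) (abs_nonneg _)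

lemma BddFn.mul {X : Type*} {f g : X → ℝ} (hf : BddFn f) (hg : BddFn g) : BddFn (f * g) := by
  obtain ⟨C, hC⟩ := hf
  obtain ⟨D, hD⟩ := hg
  refine ⟨C * D, fun x => ?_⟩
  simp only [Pi.mul_apply, abs_mul]
  exact mul_le_mul (hC x) (hD x) (abs_nonneg _) ((abs_nonneg _).trans (hC x))

lemma BddFn.const {X : Type*} (c : ℝ) : BddFn (fun _ : X => c) := ⟨|c|, fun _ => le_rfl⟩

lemma BddFn.sub {X : Type*} {f g : X → ℝ} (hf : BddFn f) (hg : BddFn g) : BddFn (f - g) := by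
  have := hf.add (hg.smul (-1))
  convert this using 1
  ext x
  simp [sub_eq_add_neg]

lemma BddFn.comp {X Y : Type*} {f : X → ℝ} (hf : BddFn f) (g : Y → X) :
    BddFn (fun y => f (g y)) := by
  obtain ⟨C, hC⟩ := hf
  exact ⟨C, fun x => hC _⟩

lemma BddFn.sum {X ι : Type*} (s : Finset ι) (f : ι → X → ℝ) (hf : ∀ i ∈ s, BddFn (f i)) :
    BddFn (∑ i ∈ s, f i) := by
  induction s using Finset.induction_on with
  | empty => exact BddFn.const (X := X) 0
  | insert a s ha ih =>
    rw [Finset.sum_insert ha]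
    exact (hf a (Finset.mem_insert_self _ _)).add
      (ih fun i hi => hf i (Finset.mem_insert_of_mem hi))

lemma IsMean.const {X : Type*} {m : (X → ℝ) →ₗ[ℝ] ℝ} (hm : IsMean m) (c : ℝ) :
    m (fun _ => c) = c := by
  have : (fun _ : X => c) = c • (1 : X → ℝ) := by ext; simp
  rw [this, map_smul, hm.1]; simp

lemma IsMean.mono {X : Type*} {m : (X → ℝ) →ₗ[ℝ] ℝ} (hm : IsMean m) {f g : X → ℝ}
    (hf : BddFn f) (hg : BddFn g) (h : ∀ x, f x ≤ g x) : m f ≤ m g := by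
  have := hm.2 (g - f) (hg.sub hf) (fun x => by simpa using h x)
  rw [map_sub] at this
  linarith

lemma IsMean.abs_le {X : Type*} {m : (X → ℝ) →ₗ[ℝ] ℝ} (hm : IsMean m) {f : X → ℝ} {C : ℝ}
    (hf : ∀ x, |f x| ≤ C) : |m f| ≤ C := by
  have hb : BddFn f := ⟨C, hf⟩
  rw [_root_.abs_le]
  constructor
  · rw [← hm.const (-C)]
    exact hm.mono (BddFn.const _) hb fun x => (_root_.abs_le.1 (hf x)).1
  · conv_rhs => rw [← hm.const C]
    exact hm.mono hb (BddFn.const _) fun x => (_root_.abs_le.1 (hf x)).2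

lemma IsMean.sq_le {X : Type*} {m : (X → ℝ) →ₗ[ℝ] ℝ} (hm : IsMean m) {f : X → ℝ}
    (hf : BddFn f) : (m f) ^ 2 ≤ m (f * f) := by
  have h := hm.2 ((f - fun _ => m f) * (f - fun _ => m f))
    ((hf.sub (BddFn.const _)).mul (hf.sub (BddFn.const _))) (fun x => mul_self_nonneg _)
  have e : (f - fun _ => m f) * (f - fun _ => m f)
      = f * f - (2 * m f) • f + fun _ => (m f) ^ 2 := by
    ext x; simp; ring
  rw [e, map_add, map_sub, map_smul, hm.const, smul_eq_mul] at h
  nlinarith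

/-- Bounded functions as a submodule. -/
def bddSub (X : Type*) : Submodule ℝ (X → ℝ) where
  carrier := {f | BddFn f}
  add_mem' := fun hf hg => BddFn.add hf hg
  zero_mem' := BddFn.const 0
  smul_mem' := fun c _ hf => BddFn.smul c hf

lemma exists_ulim {X ι : Type*} (U : Ultrafilter ι) (m : ι → (X → ℝ) →ₗ[ℝ] ℝ)
    (hm : ∀ i, IsMean (m i)) : ∃ m' : (X → ℝ) →ₗ[ℝ] ℝ, IsMean m' ∧
      ∀ f, BddFn f → Tendsto (fun i => m i f) U (𝓝 (m' f)) := by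
  have key : ∀ f : bddSub X, ∃ a : ℝ, Tendsto (fun i => m i f.1) U (𝓝 a) := by
    rintro ⟨f, C, hC⟩
    obtain ⟨a, -, ha⟩ := (isCompact_Icc (a := -C) (b := C)).ultrafilter_le_nhds
      (U.map fun i => m i f) (by
        rw [le_principal_iff]
        exact Filter.mem_map.2 (Filter.univ_mem' fun i => by
          exact _root_.abs_le.1 ((hm i).abs_le hC)))
    exact ⟨a, ha⟩
  choose L hL using key
  let l : bddSub X →ₗ[ℝ] ℝ :=
    { toFun := L
      map_add' := fun f g => tendsto_nhds_unique (hL (f + g)) (by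
        simpa using (hL f).add (hL g))
      map_smul' := fun c f => tendsto_nhds_unique (hL (c • f)) (by
        simpa using (hL f).const_mul c) }
  obtain ⟨m', hm'⟩ := LinearMap.exists_extend l
  have hlim : ∀ f, BddFn f → Tendsto (fun i => m i f) U (𝓝 (m' f)) := by
    intro f hf
    have : m' f = L ⟨f, hf⟩ := LinearMap.congr_fun hm' ⟨f, hf⟩
    rw [this]
    exact hL ⟨f, hf⟩
  refine ⟨m', ⟨?_, ?_⟩, hlim⟩
  · refine tendsto_nhds_unique (hlim 1 (BddFn.const 1)) ?_
    simp only [fun i => (hm i).1]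
    exact tendsto_const_nhds
  · intro f hf h0
    exact ge_of_tendsto' (hlim f hf) fun i => (hm i).2 f hf h0

/-- Average over a finset. -/
noncomputable def avg {X : Type*} (F : Finset X) : (X → ℝ) →ₗ[ℝ] ℝ :=
  (F.card : ℝ)⁻¹ • ∑ x ∈ F, LinearMap.proj x

lemma avg_apply {X : Type*} (F : Finset X) (f : X → ℝ) :
    avg F f = (F.card : ℝ)⁻¹ * ∑ x ∈ F, f x := by
  simp [avg]

lemma avg_isMean {X : Type*} (F : Finset X) (hF : F.Nonempty) : IsMean (avg F) := by
  have : (F.card : ℝ) ≠ 0 := by exact_mod_cast hF.card_pos.ne'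
  refine ⟨by simp [avg_apply, this], fun f _ h => ?_⟩
  rw [avg_apply]
  exact mul_nonneg (by positivity) (Finset.sum_nonneg fun x _ => h x)

lemma folner_mean {G : Type*} [AddCommGroup G] (E : Set G) (hE : PosUpperBanachDensity E) :
    ∃ m : (G → ℝ) →ₗ[ℝ] ℝ, IsMean m ∧ 0 < m (E.indicator 1) ∧
      ∀ f, BddFn f → ∀ a, m (fun x => f (x + a)) = m f := by
  obtain ⟨F, ⟨hne, hF⟩, hpos⟩ := hE
  set d := limsup (fun n => (((F n).filter (· ∈ E)).card : ℝ) / ((F n).card : ℝ)) atTop with hd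
  have hfreq : ∃ᶠ n in atTop,
      d / 2 < (((F n).filter (· ∈ E)).card : ℝ) / ((F n).card : ℝ) := by
    refine Filter.frequently_lt_of_lt_limsup ?_ (by rw [← hd]; linarith)
    refine Filter.IsBoundedUnder.isCoboundedUnder_le ⟨0, ?_⟩
    simp only [eventually_map]
    exact Eventually.of_forall fun n => by positivity
  have hnb : (atTop ⊓ 𝓟 {n | d / 2 < (((F n).filter (· ∈ E)).card : ℝ) / ((F n).card : ℝ)}).NeBot :=
    Filter.frequently_mem_iff_neBot.1 hfreq
  let U := Ultrafilter.of (atTop ⊓ 𝓟 {n | d / 2 < (((F n).filter (· ∈ E)).card : ℝ) / ((F n).card : ℝ)})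
  have hU : (U : Filter ℕ) ≤ _ := Ultrafilter.of_le _
  have hU1 := hU.trans inf_le_left
  have hU2 := hU.trans inf_le_right
  obtain ⟨m, hm, hlim⟩ := exists_ulim U (fun n => avg (F n)) (fun n => avg_isMean _ (hne n))
  have hind : BddFn (E.indicator (1 : G → ℝ)) := ⟨1, fun x => by
    by_cases h : x ∈ E <;> simp [h]⟩
  refine ⟨m, hm, ?_, ?_⟩
  · have : d / 2 ≤ m (E.indicator 1) := by
      refine ge_of_tendsto (hlim _ hind) ?_
      filter_upwards [le_principal_iff.1 hU2] with n hn
      refine le_of_lt (lt_of_lt_of_eq hn ?_)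
      rw [avg_apply, div_eq_inv_mul]
      congr 1
      rw [Finset.card_filter]
      push_cast
      exact Finset.sum_congr rfl fun x _ => by by_cases h : x ∈ E <;> simp [h]
    linarith
  · intro f hf a
    have h1 := (hlim _ (hf.comp (· + a))).sub (hlim _ hf)
    refine sub_eq_zero.1 (tendsto_nhds_unique h1 ?_)
    obtain ⟨C, hC⟩ := hf
    have h2 : Tendsto (fun n => 2 * C * (1 - ((F n ∩ (F n).image (· + a)).card : ℝ) / ((F n).card : ℝ)))
        U (𝓝 0) := by
      have := (((hF a).mono_left hU1).const_sub 1).const_mul (2 * C)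
      simpa using this
    refine squeeze_zero_norm (fun n => ?_) h2
    rw [Real.norm_eq_abs, avg_apply, avg_apply, ← mul_sub]
    have hc : (0 : ℝ) < (F n).card := by exact_mod_cast (hne n).card_pos
    have inj : Function.Injective (· + a : G → G) := add_left_injective a
    have e1 : ∑ x ∈ F n, f (x + a) = ∑ x ∈ (F n).image (· + a), f x := by
      rw [Finset.sum_image fun x _ y _ h => inj h]
    set S := (F n).image (· + a) with hS
    have hScard : S.card = (F n).card := Finset.card_image_of_injective _ inj
    have s1 : ∑ x ∈ S, f x = ∑ x ∈ S ∩ F n, f x + ∑ x ∈ S \ F n, f x :=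
      (Finset.sum_inter_add_sum_sdiff S (F n) f).symm
    have s2 : ∑ x ∈ F n, f x = ∑ x ∈ F n ∩ S, f x + ∑ x ∈ F n \ S, f x :=
      (Finset.sum_inter_add_sum_sdiff (F n) S f).symm
    have c1 : ((S ∩ F n).card : ℝ) + (S \ F n).card = (F n).card := by
      rw [← hScard]; exact_mod_cast Finset.card_inter_add_card_sdiff S (F n)
    have c2 : ((F n ∩ S).card : ℝ) + (F n \ S).card = (F n).card := by
      exact_mod_cast Finset.card_inter_add_card_sdiff (F n) S
    have b : ∀ T : Finset G, |∑ x ∈ T, f x| ≤ T.card * C := fun T => by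
      refine (Finset.abs_sum_le_sum_abs _ _).trans ?_
      simpa using Finset.sum_le_card_nsmul T _ C fun x _ => hC x
    have b1 := _root_.abs_le.1 (b (S \ F n))
    have b2 := _root_.abs_le.1 (b (F n \ S))
    rw [e1, s1, s2, abs_mul, abs_of_pos (inv_pos.2 hc)]
    rw [Finset.inter_comm S] at c1 ⊢
    have e2 : 2 * C * (1 - ((F n ∩ S).card : ℝ) / (F n).card)
        = ((F n).card : ℝ)⁻¹ * (2 * C * ((F n).card - (F n ∩ S).card)) := by
      field_simp
    rw [e2]
    refine mul_le_mul_of_nonneg_left ?_ (by positivity)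
    have x1 : ((S \ F n).card : ℝ) = (F n).card - (F n ∩ S).card := by linarith
    have x2 : ((F n \ S).card : ℝ) = (F n).card - (F n ∩ S).card := by linarith
    rw [x1] at b1
    rw [x2] at b2
    rw [_root_.abs_le]
    constructor <;> linarith [b1.1, b1.2, b2.1, b2.2]

/-- translation as a linear map on functions -/
def shiftL {G : Type*} [CommGroup G] (g : G) : (G → ℝ) →ₗ[ℝ] (G → ℝ) :=
  LinearMap.funLeft ℝ ℝ (fun x => x * g)

lemma shiftL_apply {G : Type*} [CommGroup G] (g : G) (f : G → ℝ) :
    shiftL g f = fun x => f (x * g) := rfl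

lemma mean_finset {G : Type*} [CommGroup G] (S : Finset G) :
    ∃ m : (G → ℝ) →ₗ[ℝ] ℝ, IsMean m ∧
      ∀ g ∈ S, ∀ f, BddFn f → m (fun x => f (x * g)) = m f := by
  induction S using Finset.induction_on with
  | empty => exact ⟨avg {1}, avg_isMean _ (by simp), by simp⟩
  | insert g S hg ih =>
    obtain ⟨m, hm, hinv⟩ := ih
    let M : ℕ → (G → ℝ) →ₗ[ℝ] ℝ := fun N =>
      ((N + 1 : ℕ) : ℝ)⁻¹ • ∑ k ∈ Finset.range (N + 1), m ∘ₗ shiftL (g ^ k)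
    have hMa : ∀ N f, M N f = ((N + 1 : ℕ) : ℝ)⁻¹ *
        ∑ k ∈ Finset.range (N + 1), m (fun x => f (x * g ^ k)) := by
      intro N f
      simp only [M, LinearMap.smul_apply, LinearMap.sum_apply, LinearMap.comp_apply, shiftL_apply,
        smul_eq_mul]
    have hM : ∀ N, IsMean (M N) := by
      intro N
      refine ⟨?_, fun f hf h0 => ?_⟩
      · rw [hMa]
        have : (fun x : G => (1 : ℝ)) = 1 := rfl
        simp only [Pi.one_apply, this, hm.1]
        have h : ((N + 1 : ℕ) : ℝ) ≠ 0 := by positivity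
        simp only [Finset.sum_const, Finset.card_range, nsmul_eq_mul, mul_one]
        exact inv_mul_cancel₀ h
      · rw [hMa]
        exact mul_nonneg (by positivity) (Finset.sum_nonneg fun k _ =>
          hm.2 _ (hf.comp _) fun x => h0 _)
    obtain ⟨m', hm', hlim⟩ := exists_ulim (Filter.hyperfilter ℕ) M hM
    refine ⟨m', hm', ?_⟩
    intro h hh f hf
    rcases Finset.mem_insert.1 hh with rfl | hS
    · have h1 := (hlim _ (hf.comp (· * h))).sub (hlim _ hf)
      refine sub_eq_zero.1 (tendsto_nhds_unique h1 ?_)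
      obtain ⟨C, hC⟩ := hf
      have h2 : Tendsto (fun N : ℕ => (2 * C) * (1 / ((N : ℝ) + 1))) (Filter.hyperfilter ℕ) (𝓝 0) := by
        have := (tendsto_one_div_add_atTop_nhds_zero_nat (𝕜 := ℝ)).const_mul (2 * C)
        rw [mul_zero] at this
        exact this.mono_left Nat.hyperfilter_le_atTop
      refine squeeze_zero_norm (fun N => ?_) h2
      rw [Real.norm_eq_abs, hMa, hMa, ← mul_sub, ← Finset.sum_sub_distrib]
      have e : ∑ k ∈ Finset.range (N + 1), (m (fun x => f (x * h ^ k * h)) - m (fun x => f (x * h ^ k)))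
          = m (fun x => f (x * h ^ (N + 1))) - m (fun x => f (x * h ^ 0)) := by
        rw [← Finset.sum_range_sub (fun k => m (fun x => f (x * h ^ k)))]
        refine Finset.sum_congr rfl fun k _ => ?_
        simp only [pow_succ, mul_assoc]
      rw [e, abs_mul, abs_of_pos (by positivity)]
      have a1 := _root_.abs_le.1 (hm.abs_le (f := fun x => f (x * h ^ (N + 1))) fun x => hC _)
      have a2 := _root_.abs_le.1 (hm.abs_le (f := fun x => f (x * h ^ 0)) fun x => hC _)
      rw [mul_comm, one_div]
      push_cast
      refine mul_le_mul_of_nonneg_right ?_ (by positivity)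
      rw [_root_.abs_le]
      constructor <;> linarith [a1.1, a1.2, a2.1, a2.2]
    · refine tendsto_nhds_unique (hlim _ (hf.comp (· * h))) ?_
      refine (hlim _ hf).congr fun N => ?_
      rw [hMa, hMa]
      congr 1
      refine Finset.sum_congr rfl fun k _ => ?_
      rw [← hinv h hS (fun x => f (x * g ^ k)) (hf.comp _)]
      simp only [mul_right_comm]

lemma mean_group (G : Type*) [CommGroup G] :
    ∃ m : (G → ℝ) →ₗ[ℝ] ℝ, IsMean m ∧
      ∀ g, ∀ f, BddFn f → m (fun x => f (x * g)) = m f := by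
  choose m hm hinv using mean_finset (G := G)
  obtain ⟨m', hm', hlim⟩ := exists_ulim (Ultrafilter.of (atTop : Filter (Finset G))) m hm
  refine ⟨m', hm', fun g f hf => ?_⟩
  refine tendsto_nhds_unique (hlim _ (hf.comp (· * g))) ?_
  refine (hlim _ hf).congr' ?_
  refine (Ultrafilter.of_le (atTop : Filter (Finset G))) ?_
  filter_upwards [eventually_ge_atTop {g}] with S hS
  exact (hinv S g (hS (Finset.mem_singleton_self g)) f hf).symm

/-! ### The core positive-definiteness argument -/

/-- Properties of the averaged correlation function. -/
structure Good {K : Type*} [Field K] (φ : K × K → ℝ) (δ : ℝ) : Prop where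
  nonneg : ∀ p, 0 ≤ φ p
  le_one : ∀ p, φ p ≤ 1
  symm : ∀ p, φ (-p) = φ p
  inv : ∀ t : K, t ≠ 0 → ∀ a b, φ (t * a, t⁻¹ * b) = φ (a, b)
  pd : ∀ (ι : Type) [Fintype ι] (c : ι → ℝ) (p : ι → K × K),
    δ ^ 2 * (∑ i, c i) ^ 2 ≤ ∑ i, ∑ j, c i * c j * φ (p i - p j)

lemma le_of_forall_nat {a b C : ℝ} (h : ∀ N : ℕ, a * N ^ 2 ≤ C * N + b * N ^ 2) : a ≤ b := by
  by_contra hab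
  push Not at hab
  obtain ⟨N, hN⟩ := exists_nat_gt (max 0 (C / (a - b)))
  have h0 : (0 : ℝ) < N := lt_of_le_of_lt (le_max_left _ _) hN
  have h1 : C / (a - b) < N := lt_of_le_of_lt (le_max_right _ _) hN
  rw [div_lt_iff₀ (by linarith)] at h1
  have := h N
  nlinarith

lemma sum_diag_bound (N : ℕ) (D : ℕ → ℕ → ℝ) (C e : ℝ) (hd : ∀ i, D i i ≤ C + e)
    (ho : ∀ i j, i ≠ j → D i j ≤ e) :
    ∑ i : Fin N, ∑ j : Fin N, D i j ≤ C * N + e * N ^ 2 := by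
  calc ∑ i : Fin N, ∑ j : Fin N, D i j
      ≤ ∑ i : Fin N, ∑ j : Fin N, ((if i = j then C else 0) + e) := by
        refine Finset.sum_le_sum fun i _ => Finset.sum_le_sum fun j _ => ?_
        split_ifs with h
        · subst h; exact hd _
        · simpa using ho i j (fun h' => h (Fin.ext h'))
    _ = C * N + e * N ^ 2 := by
        simp [Finset.sum_add_distrib]; ring

lemma Good.test {K : Type*} [Field K] {φ : K × K → ℝ} {δ : ℝ} (hφ : Good φ δ)
    (v : K × K) (x z : ℕ → K × K) (ε η γ : ℝ) (hε : 0 ≤ ε)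
    (hx : ∀ i, φ (x i - v) + ε ≤ φ (z i - v))
    (hxx : ∀ i j, i ≠ j → |φ (x i - x j) - γ| ≤ η)
    (hzz : ∀ i j, i ≠ j → |φ (z i - z j) - γ| ≤ η)
    (hxz : ∀ i j, i ≠ j → |φ (x i - z j) - γ| ≤ η) : ε ^ 2 ≤ 4 * η := by
  have hη : 0 ≤ η := (abs_nonneg _).trans (hxx 0 1 (by norm_num))
  refine le_of_forall_nat (C := 4) fun N => ?_
  have sw : ∀ p p', φ (p - p') = φ (p' - p) := fun p p' => by rw [← hφ.symm, neg_sub]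
  have h := hφ.pd (Option (Fin N ⊕ Fin N))
    (fun o => o.elim (N * ε) (Sum.elim (fun _ => 1) (fun _ => -1)))
    (fun o => o.elim v (Sum.elim (fun i => x i) (fun i => z i)))
  have h0 := le_trans (mul_nonneg (sq_nonneg _) (sq_nonneg _)) h
  clear h
  simp only [Fintype.sum_option, Fintype.sum_sum_type, Option.elim, Sum.elim_inl, Sum.elim_inr,
    sub_self, sw v] at h0
  set D : ℕ → ℕ → ℝ := fun i j =>
    φ (x i - x j) - φ (x i - z j) - φ (z i - x j) + φ (z i - z j) with hD
  have hDs := sum_diag_bound N D 4 (4 * η) (fun i => by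
      have := hφ.le_one (x i - x i)
      have := hφ.le_one (z i - z i)
      have := hφ.nonneg (x i - z i)
      have := hφ.nonneg (z i - x i)
      simp only [hD]; linarith) (fun i j hij => by
      have h1 := abs_le.1 (hxx i j hij)
      have h2 := abs_le.1 (hzz i j hij)
      have h3 := abs_le.1 (hxz i j hij)
      have h4 := abs_le.1 (hxz j i hij.symm)
      rw [sw] at h4
      simp only [hD]; linarith [h1.2, h2.2, h3.1, h4.1])
  have hT : ∑ i : Fin N, (φ (x i - v) - φ (z i - v)) ≤ - (N * ε) := by
    calc ∑ i : Fin N, (φ (x i - v) - φ (z i - v)) ≤ ∑ i : Fin N, (-ε) :=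
          Finset.sum_le_sum fun i _ => by linarith [hx i]
      _ = _ := by simp
  have e : N * ε * (N * ε) * φ 0 + 2 * (N * ε) * ∑ i : Fin N, (φ (x i - v) - φ (z i - v))
      + ∑ i : Fin N, ∑ j : Fin N, D i j ≥ 0 := by
    refine le_of_le_of_eq h0 ?_
    simp only [hD, Finset.sum_add_distrib, Finset.sum_sub_distrib, ← Finset.mul_sum, mul_sub]
    simp only [one_mul, mul_one, neg_mul, mul_neg, neg_neg, Finset.sum_neg_distrib]
    ring
  have h1 : N * ε * (N * ε) * φ 0 ≤ N * ε * (N * ε) :=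
    mul_le_of_le_one_right (mul_self_nonneg _) (hφ.le_one 0)
  have h2 : 2 * (N * ε) * ∑ i : Fin N, (φ (x i - v) - φ (z i - v)) ≤ 2 * (N * ε) * (-(N * ε)) :=
    mul_le_mul_of_nonneg_left hT (by positivity)
  nlinarith

lemma Good.eq_one {K : Type*} [Field K] {φ : K × K → ℝ} {δ : ℝ} (hφ : Good φ δ)
    (a b : K) (ha : a ≠ 0) : φ (a, b) = φ (1, a * b) := by
  rw [← hφ.inv a⁻¹ (inv_ne_zero ha) a b, inv_inv, inv_mul_cancel₀ ha]

lemma Good.no_gap {K : Type*} [Field K] {φ : K × K → ℝ} {δ : ℝ} (hφ : Good φ δ)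
    (S T : Set K) (hS : S.Infinite) (hT : T.Infinite) (ε : ℝ) (hε : 0 < ε)
    (h : ∀ s ∈ S, ∀ t ∈ T, φ (1, s) + ε ≤ φ (1, t)) : False := by
  have hS' : (S \ {0}).Infinite := hS.sdiff (Set.finite_singleton 0)
  have hT' : (T \ {0}).Infinite := hT.sdiff (Set.finite_singleton 0)
  let a := hS'.natEmbedding
  let b := hT'.natEmbedding
  have ha : ∀ i, (a i : K) ∈ S ∧ (a i : K) ≠ 0 := fun i => ⟨(a i).2.1, (a i).2.2⟩
  have hb : ∀ i, (b i : K) ∈ T ∧ (b i : K) ≠ 0 := fun i => ⟨(b i).2.1, (b i).2.2⟩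
  have hax : ∀ r : K, r ≠ 0 → φ (r, 0) = φ (1, 0) := fun r hr => by
    rw [hφ.eq_one r 0 hr, mul_zero]
  have := hφ.test (0, -1) (fun i => (a i, 0)) (fun i => (b i, 0)) ε 0 (φ (1, 0)) hε.le
    (fun i => by
      simp only [Prod.mk_sub_mk, sub_zero, zero_sub, neg_neg]
      rw [hφ.eq_one _ _ (ha i).2, hφ.eq_one _ _ (hb i).2, mul_one, mul_one]
      exact h _ (ha i).1 _ (hb i).1)
    (fun i j hij => by
      simp only [Prod.mk_sub_mk, sub_zero]
      rw [hax]
      · simp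
      · rw [sub_ne_zero]
        exact fun h => hij (a.injective (Subtype.ext h)))
    (fun i j hij => by
      simp only [Prod.mk_sub_mk, sub_zero]
      rw [hax]
      · simp
      · rw [sub_ne_zero]
        exact fun h => hij (b.injective (Subtype.ext h)))
    (fun i j hij => by
      simp only [Prod.mk_sub_mk, sub_zero]
      rw [hax]
      · simp
      · rw [sub_ne_zero]
        intro h'
        have := h _ (ha i).1 _ (hb j).1
        rw [h'] at this
        linarith)
  nlinarith

lemma Good.exists_lim {K : Type*} [Field K] [Infinite K] {φ : K × K → ℝ} {δ : ℝ}
    (hφ : Good φ δ) : ∃ γ : ℝ, ∀ η > 0, {s : K | η < |φ (1, s) - γ|}.Finite := by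
  obtain ⟨γ, -, hγ⟩ := (isCompact_Icc (a := (0 : ℝ)) (b := 1)).ultrafilter_le_nhds
      ((hyperfilter K).map fun s => φ (1, s)) (by
        rw [le_principal_iff]
        exact Filter.mem_map.2 (Filter.univ_mem' fun s => ⟨hφ.nonneg _, hφ.le_one _⟩))
  have hγ' : Tendsto (fun s => φ (1, s)) (hyperfilter K) (𝓝 γ) := hγ
  refine ⟨γ, fun η hη => ?_⟩
  have hI : {s : K | |φ (1, s) - γ| < η / 2}.Infinite := by
    intro hfin
    have hm : {s : K | |φ (1, s) - γ| < η / 2} ∈ hyperfilter K :=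
      hγ' (Metric.ball_mem_nhds γ (half_pos hη))
    exact hfin.notMem_hyperfilter hm
  by_contra hinf
  have : {s : K | η < |φ (1, s) - γ|} ⊆ {s | φ (1, s) < γ - η} ∪ {s | γ + η < φ (1, s)} := by
    intro s hs
    rcases lt_abs.1 (show η < |φ (1, s) - γ| from hs) with h | h
    · right; simp only [Set.mem_ofPred_eq]; linarith
    · left; simp only [Set.mem_ofPred_eq]; linarith
  rcases Set.infinite_union.1 (Set.Infinite.mono this hinf) with h | h
  · refine hφ.no_gap _ _ h hI (η / 2) (half_pos hη) fun s hs t ht => ?_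
    have := (abs_lt.1 (show |φ (1, t) - γ| < η / 2 from ht)).1
    have : φ (1, s) < γ - η := hs
    linarith
  · refine hφ.no_gap _ _ hI h (η / 2) (half_pos hη) fun s hs t ht => ?_
    have := (abs_lt.1 (show |φ (1, s) - γ| < η / 2 from hs)).2
    have : γ + η < φ (1, t) := ht
    linarith

lemma quad_finite {K : Type*} [Field K] (t a b s : K) (ht : t ≠ 0) (hb : b ≠ 0) :
    {x : K | x ≠ 0 ∧ (t - x) * (b / t - a / x) = s}.Finite := by
  obtain ⟨e, he⟩ : ∃ e, e = t ^ 2 * a := ⟨_, rfl⟩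
  obtain ⟨d, hd⟩ : ∃ d, d = -((a + b - s) * t) := ⟨_, rfl⟩
  let P : Polynomial K := Polynomial.C b * Polynomial.X ^ 2
    + Polynomial.C d * Polynomial.X + Polynomial.C e
  have hP : P ≠ 0 := by
    intro h
    have h2 : P.coeff 2 = b := by
      simp [P, Polynomial.coeff_X, Polynomial.coeff_C]
    rw [h] at h2
    exact hb (by simpa using h2.symm)
  refine (P.rootSet_finite K).subset ?_
  rintro x ⟨hx, h⟩
  rw [Polynomial.mem_rootSet]
  refine ⟨hP, ?_⟩
  simp only [P, map_add, map_mul, map_pow, Polynomial.aeval_C, Polynomial.aeval_X,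
    Algebra.algebraMap_self, RingHom.id_apply]
  rw [he, hd]
  field_simp at h
  linear_combination -h

lemma exists_points {K : Type*} [Field K] [Infinite K] (S : Set K) (hS : S.Finite) (q r : K)
    (hq : q ≠ 0) (hr : r ≠ 0) : ∃ x : ℕ → K, (∀ n, x n ≠ 0) ∧ ∀ m n, m < n → x m ≠ x n ∧
      ∀ a b, (a = q ∨ a = r) → (b = q ∨ b = r) →
        (x m - x n) * (b / x m - a / x n) ∉ S := by
  obtain ⟨x, h1, h2⟩ := exists_seq_of_forall_finset_exists (fun x : K => x ≠ 0)
    (fun t x => t ≠ x ∧ ∀ a b, (a = q ∨ a = r) → (b = q ∨ b = r) →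
        (t - x) * (b / t - a / x) ∉ S) (by
    intro F hF
    have hfin : ((⋃ t ∈ F, ⋃ a ∈ ({q, r} : Set K), ⋃ b ∈ ({q, r} : Set K), ⋃ s ∈ S,
        {x : K | x ≠ 0 ∧ (t - x) * (b / t - a / x) = s}) ∪ (F : Set K) ∪ {0}).Finite := by
      refine Set.Finite.union (Set.Finite.union ?_ F.finite_toSet) (Set.finite_singleton 0)
      refine Set.Finite.biUnion F.finite_toSet fun t ht => ?_
      refine Set.Finite.biUnion (Set.toFinite _) fun a ha => ?_
      refine Set.Finite.biUnion (Set.toFinite _) fun b hb => ?_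
      refine Set.Finite.biUnion hS fun s hs => ?_
      refine quad_finite t a b s (hF t ht) ?_
      rcases hb with rfl | rfl <;> assumption
    obtain ⟨y, hy⟩ := hfin.infinite_compl.nonempty
    simp only [Set.mem_compl_iff, Set.mem_union, not_or, Set.mem_iUnion, not_exists,
      Set.mem_singleton_iff, Finset.mem_coe, Set.mem_ofPred_eq] at hy
    obtain ⟨⟨hy1, hy2⟩, hy3⟩ := hy
    refine ⟨y, hy3, fun t ht => ⟨fun h => hy2 (h ▸ ht), fun a b ha hb hmem => ?_⟩⟩
    exact hy1 t ht a ha b hb _ hmem ⟨hy3, rfl⟩)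
  exact ⟨x, h1, h2⟩

lemma Good.core {K : Type*} [Field K] [Infinite K] {φ : K × K → ℝ} {δ : ℝ}
    (hφ : Good φ δ) (hδ : 0 < δ) (q : K) (hq : q ≠ 0) (h0 : φ (1, q) = 0) : False := by
  obtain ⟨γ, hγ⟩ := hφ.exists_lim
  have sw : ∀ p p', φ (p - p') = φ (p' - p) := fun p p' => by rw [← hφ.symm, neg_sub]
  -- the generic points
  have key : ∀ η > 0, ∃ r : K, |φ (1, r) - γ| ≤ η ∧ ∃ x : ℕ → K, (∀ n, x n ≠ 0) ∧
      ∀ m n, m ≠ n → ∀ a b, (a = q ∨ a = r) → (b = q ∨ b = r) →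
        |φ ((x m, b / x m) - (x n, a / x n)) - γ| ≤ η := by
    intro η hη
    obtain ⟨r, hr⟩ := ((hγ η hη).union (Set.finite_singleton 0)).infinite_compl.nonempty
    simp only [Set.mem_compl_iff, Set.mem_union, not_or, Set.mem_ofPred_eq, not_lt,
      Set.mem_singleton_iff] at hr
    obtain ⟨x, hx0, hx⟩ := exists_points _ (hγ η hη) q r hq hr.2
    have main : ∀ m n, m < n → ∀ a b, (a = q ∨ a = r) → (b = q ∨ b = r) →
        |φ ((x m, b / x m) - (x n, a / x n)) - γ| ≤ η := by
      intro m n hmn a b ha hb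
      obtain ⟨hne, h⟩ := hx m n hmn
      have := h a b ha hb
      simp only [Set.mem_ofPred_eq, not_lt] at this
      rw [Prod.mk_sub_mk, hφ.eq_one _ _ (sub_ne_zero.2 hne)]
      exact this
    refine ⟨r, hr.1, x, hx0, fun m n hmn a b ha hb => ?_⟩
    rcases lt_or_gt_of_ne hmn with h | h
    · exact main m n h a b ha hb
    · rw [sw]
      exact main n m h b a hb ha
  have hγδ : δ ^ 2 ≤ γ := by
    refine le_of_forall_pos_le_add fun η hη => ?_
    obtain ⟨r, hr, x, hx0, hx⟩ := key η hη
    refine le_of_forall_nat (C := 1 + |γ + η|) fun N => ?_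
    have h := hφ.pd (Fin N) (fun _ => 1) (fun i => (x i, q / x i))
    simp only [Finset.sum_const, Finset.card_univ, Fintype.card_fin, nsmul_eq_mul, mul_one,
      one_mul] at h
    refine h.trans (sum_diag_bound N (fun i j => φ ((x i, q / x i) - (x j, q / x j)))
      (1 + |γ + η|) (γ + η) (fun i => ?_) (fun i j hij => ?_))
    · linarith [hφ.le_one ((x i, q / x i) - (x i, q / x i)), neg_abs_le (γ + η)]
    · linarith [(abs_le.1 (hx i j hij q q (Or.inl rfl) (Or.inl rfl))).2]
  have hγ0 : 0 < γ := lt_of_lt_of_le (by positivity) hγδ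
  have hη : 0 < min (γ / 2) (γ ^ 2 / 32) := by positivity
  obtain ⟨r, hr, x, hx0, hx⟩ := key _ hη
  have := hφ.test 0 (fun i => (x i, q / x i)) (fun i => (x i, r / x i)) (γ / 2) _ γ (by positivity)
    (fun i => by
      rw [sub_zero, sub_zero, hφ.eq_one _ _ (hx0 i), hφ.eq_one _ _ (hx0 i),
        mul_div_cancel₀ _ (hx0 i), mul_div_cancel₀ _ (hx0 i), h0]
      linarith [(abs_le.1 hr).1, min_le_left (γ / 2) (γ ^ 2 / 32)])
    (fun i j hij => hx i j hij q q (Or.inl rfl) (Or.inl rfl))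
    (fun i j hij => hx i j hij r r (Or.inr rfl) (Or.inr rfl))
    (fun i j hij => hx i j hij r q (Or.inr rfl) (Or.inl rfl))
  nlinarith [min_le_right (γ / 2) (γ ^ 2 / 32)]

/-! ### Assembling -/

lemma good_of_mean {K : Type*} [Field K] (m : (K × K → ℝ) →ₗ[ℝ] ℝ) (hm : IsMean m)
    (hinv : ∀ f, BddFn f → ∀ a, m (fun x => f (x + a)) = m f) (E : Set (K × K)) (q : K)
    (hE : ∀ p ∈ E, ∀ t : K, t ≠ 0 → p + (t, t⁻¹ * q) ∉ E) :
    ∃ φ : K × K → ℝ, Good φ (m (E.indicator 1)) ∧ φ (1, q) = 0 := by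
  obtain ⟨M, hM, hMinv⟩ := mean_group Kˣ
  obtain ⟨e, he⟩ : ∃ e : K × K → ℝ, e = E.indicator 1 := ⟨_, rfl⟩
  rw [← he]
  have e0 : ∀ w, 0 ≤ e w := fun w => by
    rw [he]; by_cases h : w ∈ E <;> simp [h]
  have e1 : ∀ w, e w ≤ 1 := fun w => by
    rw [he]; by_cases h : w ∈ E <;> simp [h]
  have eb : BddFn e := ⟨1, fun w => abs_le.2 ⟨by linarith [e0 w], e1 w⟩⟩
  have eb2 : ∀ p, BddFn (fun w => e w * e (w + p)) := fun p => eb.mul (eb.comp (· + p))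
  obtain ⟨φ0, hφ0⟩ : ∃ φ0 : K × K → ℝ, ∀ p, φ0 p = m (fun w => e w * e (w + p)) :=
    ⟨_, fun _ => rfl⟩
  have n0 : ∀ p, 0 ≤ φ0 p := fun p => by
    rw [hφ0]; exact hm.2 _ (eb2 p) fun w => mul_nonneg (e0 _) (e0 _)
  have n1 : ∀ p, φ0 p ≤ 1 := fun p => by
    rw [hφ0, ← hm.const 1]
    exact hm.mono (eb2 p) (BddFn.const 1) fun w => mul_le_one₀ (e1 _) (e0 _) (e1 _)
  have nb : BddFn φ0 := ⟨1, fun w => abs_le.2 ⟨by linarith [n0 w], n1 w⟩⟩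
  have corr : ∀ p p', φ0 (p - p') = m (fun w => e (w + p') * e (w + p)) := by
    intro p p'
    rw [hφ0, ← hinv _ (eb2 (p - p')) p']
    congr 1
    ext w
    rw [show w + p' + (p - p') = w + p by abel]
  have s0 : ∀ p, φ0 (-p) = φ0 p := by
    intro p
    have h := corr 0 p
    rw [zero_sub] at h
    rw [h, hφ0]
    congr 1
    ext w
    rw [add_zero, mul_comm]
  have pd0 : ∀ (ι : Type) [Fintype ι] (c : ι → ℝ) (p : ι → K × K),
      (m e) ^ 2 * (∑ i, c i) ^ 2 ≤ ∑ i, ∑ j, c i * c j * φ0 (p i - p j) := by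
    intro ι _ c p
    let g : K × K → ℝ := ∑ i, c i • fun w => e (w + p i)
    have gb : BddFn g := BddFn.sum _ _ fun i _ => (eb.comp (· + p i)).smul (c i)
    have mg : m g = m e * ∑ i, c i := by
      simp only [g, map_sum, map_smul, smul_eq_mul, Finset.mul_sum]
      exact Finset.sum_congr rfl fun i _ => by rw [hinv e eb, mul_comm]
    have mgg : m (g * g) = ∑ i, ∑ j, c i * c j * φ0 (p i - p j) := by
      have : g * g = ∑ i, ∑ j, (c i * c j) • fun w => e (w + p j) * e (w + p i) := by
        ext w
        simp only [g, Pi.mul_apply, Finset.sum_apply, Pi.smul_apply, smul_eq_mul,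
          Finset.sum_mul_sum]
        exact Finset.sum_congr rfl fun i _ => Finset.sum_congr rfl fun j _ => by ring
      rw [this]
      simp only [map_sum, map_smul, smul_eq_mul, corr]
    rw [← mgg, ← mul_pow, ← mg]
    exact hm.sq_le gb
  let act : Kˣ → K × K → K × K := fun t p => ((t : K) * p.1, (t : K)⁻¹ * p.2)
  have act_sub : ∀ t p p', act t (p - p') = act t p - act t p' := fun t p p' => by
    simp [act, mul_sub]
  have act_neg : ∀ t p, act t (-p) = - act t p := fun t p => by simp [act]
  have ab : ∀ p, BddFn (fun t : Kˣ => φ0 (act t p)) := fun p => nb.comp (fun t => act t p)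
  refine ⟨fun p => M (fun t => φ0 (act t p)), ⟨?_, ?_, ?_, ?_, ?_⟩, ?_⟩
  · exact fun p => hM.2 _ (ab p) fun t => n0 _
  · intro p
    rw [← hM.const 1]
    exact hM.mono (ab p) (BddFn.const 1) fun t => n1 _
  · intro p
    simp only [act_neg, s0]
  · intro t ht a b
    rw [← hMinv (Units.mk0 t ht) _ (ab (a, b))]
    congr 1
    ext s
    simp [act, mul_assoc, mul_comm, mul_left_comm]
  · intro ι _ c p
    have e2 : ∑ i, ∑ j, c i * c j * M (fun t => φ0 (act t (p i - p j)))
        = M (∑ i, ∑ j, (c i * c j) • fun t => φ0 (act t (p i - p j))) := by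
      simp only [map_sum, map_smul, smul_eq_mul]
    rw [e2, ← hM.const ((m e) ^ 2 * (∑ i, c i) ^ 2)]
    refine hM.mono (BddFn.const _) ?_ ?_
    · exact BddFn.sum _ _ fun i _ => BddFn.sum _ _ fun j _ => (ab _).smul _
    · intro t
      have := pd0 ι c (fun i => act t (p i))
      simpa only [Finset.sum_apply, Pi.smul_apply, smul_eq_mul, act_sub] using this
  · have : (fun t : Kˣ => φ0 (act t (1, q))) = fun _ => 0 := by
      ext t
      rw [hφ0, ← hm.const 0]
      congr 1
      ext w
      rw [he]
      by_cases h : w ∈ E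
      · have := hE w h t t.ne_zero
        simp [act, this]
      · simp [h]
    change M (fun t : Kˣ => φ0 (act t (1, q))) = 0
    rw [this, hM.const]

lemma ind_bdd {X : Type*} (E : Set X) : BddFn (E.indicator (1 : X → ℝ)) :=
  ⟨1, fun x => by by_cases h : x ∈ E <;> simp [h]⟩

lemma prod_mean {X Y : Type*} [AddCommGroup X] [AddCommGroup Y]
    (mA : (X → ℝ) →ₗ[ℝ] ℝ) (mB : (Y → ℝ) →ₗ[ℝ] ℝ) (hA : IsMean mA) (hB : IsMean mB)
    (iA : ∀ f, BddFn f → ∀ a, mA (fun x => f (x + a)) = mA f)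
    (iB : ∀ f, BddFn f → ∀ a, mB (fun x => f (x + a)) = mB f) :
    ∃ m : (X × Y → ℝ) →ₗ[ℝ] ℝ, IsMean m ∧
      (∀ f, BddFn f → ∀ a, m (fun x => f (x + a)) = m f) ∧
      ∀ f, m f = mA (fun x => mB (fun y => f (x, y))) := by
  let m : (X × Y → ℝ) →ₗ[ℝ] ℝ :=
    mA ∘ₗ (LinearMap.pi fun x => mB ∘ₗ LinearMap.funLeft ℝ ℝ (fun y => (x, y)))
  have hmf : ∀ f, m f = mA (fun x => mB (fun y => f (x, y))) := fun f => rfl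
  have ib : ∀ f : X × Y → ℝ, BddFn f → BddFn (fun x => mB (fun y => f (x, y))) := by
    rintro f ⟨C, hC⟩
    exact ⟨C, fun x => hB.abs_le fun y => hC _⟩
  refine ⟨m, ⟨?_, ?_⟩, ?_, hmf⟩
  · rw [hmf]
    simp only [Pi.one_apply, hB.const, hA.const]
  · intro f hf h0
    rw [hmf]
    exact hA.2 _ (ib f hf) fun x => hB.2 _ (hf.comp _) fun y => h0 _
  · rintro f hf ⟨a, b⟩
    rw [hmf, hmf, ← iA _ (ib f hf) a]
    congr 1
    ext x
    exact iB (fun y => f (x + a, y)) (hf.comp _) b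

lemma main_part {K : Type*} [Field K] [Infinite K]
    (A B : Set K) (hA : PosUpperBanachDensity A) (hB : PosUpperBanachDensity B)
    (Q : Finset K) : ∃ a ∈ A, ∃ b ∈ B, ∀ q ∈ Q, ∃ a' ∈ A, ∃ b' ∈ B, (a' - a) * (b' - b) = q := by
  by_contra hcon
  push Not at hcon
  obtain ⟨mA, hmA, pA, iA⟩ := folner_mean A hA
  obtain ⟨mB, hmB, pB, iB⟩ := folner_mean B hB
  obtain ⟨m, hm, im, hmf⟩ := prod_mean mA mB hmA hmB iA iB
  let bad : K → Set (K × K) := fun q => {p | p.1 ∈ A ∧ p.2 ∈ B ∧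
    ∀ a' ∈ A, ∀ b' ∈ B, (a' - p.1) * (b' - p.2) ≠ q}
  have hpos : 0 < m ((A ×ˢ B).indicator 1) := by
    rw [hmf]
    have : (fun x => mB (fun y => (A ×ˢ B).indicator (1 : K × K → ℝ) (x, y)))
        = (mB (B.indicator 1)) • A.indicator (1 : K → ℝ) := by
      ext x
      by_cases hx : x ∈ A
      · have : (fun y => (A ×ˢ B).indicator (1 : K × K → ℝ) (x, y)) = B.indicator 1 := by
          ext y
          by_cases hy : y ∈ B <;> simp [hx, hy]
        rw [this]; simp [hx]
      · have : (fun y => (A ×ˢ B).indicator (1 : K × K → ℝ) (x, y)) = fun _ => 0 := by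
          ext y
          simp [hx]
        rw [this, hmB.const]; simp [hx]
    rw [this, map_smul, smul_eq_mul]
    positivity
  have hle : m ((A ×ˢ B).indicator 1) ≤ ∑ q ∈ Q, m ((bad q).indicator 1) := by
    rw [← map_sum]
    refine hm.mono (ind_bdd _) (BddFn.sum _ _ fun q _ => ind_bdd _) fun p => ?_
    rw [Finset.sum_apply]
    have nn : ∀ q ∈ Q, 0 ≤ (bad q).indicator (1 : K × K → ℝ) p := fun q _ =>
      Set.indicator_nonneg (fun _ _ => zero_le_one) p
    by_cases hp : p ∈ A ×ˢ B
    · obtain ⟨q, hq, h⟩ := hcon p.1 hp.1 p.2 hp.2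
      have hb : p ∈ bad q := ⟨hp.1, hp.2, h⟩
      refine le_trans ?_ (Finset.single_le_sum nn hq)
      simp [hp, hb]
    · rw [Set.indicator_of_notMem hp]
      exact Finset.sum_nonneg nn
  obtain ⟨q, hq, hqpos⟩ : ∃ q ∈ Q, 0 < m ((bad q).indicator 1) := by
    by_contra hno
    push Not at hno
    linarith [Finset.sum_nonpos hno]
  have hq0 : q ≠ 0 := by
    rintro rfl
    have : bad 0 = ∅ := by
      ext p
      simp only [Set.mem_empty_iff_false, iff_false]
      rintro ⟨h1, h2, h3⟩
      exact h3 p.1 h1 p.2 h2 (by simp)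
    rw [this, Set.indicator_empty] at hqpos
    have h0 : m (fun _ => 0) = 0 := hm.const 0
    exact absurd h0 hqpos.ne'
  obtain ⟨φ, hφ, h0⟩ := good_of_mean m hm im (bad q) q (by
    rintro p ⟨h1, h2, h3⟩ t ht ⟨h4, h5, -⟩
    refine h3 _ h4 _ h5 ?_
    simp [ht])
  exact hφ.core hqpos q hq0 h0

/-- For sets `A, B ⊆ K` of positive upper Banach density, every finite `Q ⊆ K` satisfies
`Q ⊆ (A − a_Q)·(B − b_Q)` for some `(a_Q, b_Q) ∈ A × B`; in particular
`K = (A − A)·(B − B)`. -/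
theorem statement11
    {K : Type*} [Field K] [Countable K] [Infinite K]
    (A B : Set K) (hA : PosUpperBanachDensity A) (hB : PosUpperBanachDensity B) :
    (∀ Q : Finset K, ∃ a ∈ A, ∃ b ∈ B,
        (Q : Set K) ⊆ ((fun x => x - a) '' A) * ((fun x => x - b) '' B)) ∧
      (A - A) * (B - B) = Set.univ := by
  have main := main_part A B hA hB
  constructor
  · intro Q
    obtain ⟨a, ha, b, hb, h⟩ := main Q
    refine ⟨a, ha, b, hb, fun q hq => ?_⟩
    obtain ⟨a', ha', b', hb', e⟩ := h q hq
    exact Set.mem_mul.2 ⟨a' - a, ⟨a', ha', rfl⟩, b' - b, ⟨b', hb', rfl⟩, e⟩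
  · refine Set.eq_univ_of_forall fun q => ?_
    obtain ⟨a, ha, b, hb, h⟩ := main {q}
    obtain ⟨a', ha', b', hb', e⟩ := h q (Finset.mem_singleton_self q)
    exact Set.mem_mul.2 ⟨a' - a, Set.sub_mem_sub ha' ha, b' - b, Set.sub_mem_sub hb' hb, e⟩
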